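/- arXiv:1104.2705 — 2 statements merged into one kernel-verified Lean document; each statement's English description precedes it below -/
import Mathlib

section
/- Let n ≥ 1 and x, y ∈ ℍⁿ. Then the commutator X(x)·X(y) − X(y)·X(x) equals P(p), where p := Σ_{a=1}^{n} (x_a·conj(y_a) − y_a·conj(x_a)); in particular p is purely imaginary, so the bracket of two such degree −1 matrices is a degree −2 matrix. -/
open Quaternion Matrix

noncomputable section

def iq : ℍ[ℝ] := ⟨0,1,0,0⟩
def jq : ℍ[ℝ] := ⟨0,0,1,0⟩
def kq : ℍ[ℝ] := ⟨0,0,0,1⟩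

/-- The `ℂ`-part `u` in the decomposition `q = u + j·v`. -/
def Qc (q : ℍ[ℝ]) : ℂ := ⟨q.re, q.imI⟩

/-- The `ℂ`-part `v` in the decomposition `q = u + j·v`. -/
def Qj (q : ℍ[ℝ]) : ℂ := ⟨q.imJ, -q.imK⟩

/-- Embedding of `ℂ` into the quaternions. -/
def toH (u : ℂ) : ℍ[ℝ] := ⟨u.re, u.im, 0, 0⟩

/-- `φ : M_m(ℍ) → M_{2m}(ℂ)`, `U + jV ↦ [[U, -conj V],[V, conj U]]`. -/
def phi (m : ℕ) (M : Matrix (Fin m) (Fin m) ℍ[ℝ]) :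
    Matrix (Fin m ⊕ Fin m) (Fin m ⊕ Fin m) ℂ :=
  Matrix.fromBlocks (M.map Qc) (-((M.map Qj).map (starRingEnd ℂ)))
    (M.map Qj) ((M.map Qc).map (starRingEnd ℂ))

/-- The index `a + 1` of `Fin (n+2)`, for `a : Fin n` (the "middle" indices `1,…,n`). -/
def mid {n : ℕ} (a : Fin n) : Fin (n+2) := ⟨a.val + 1, by omega⟩

def JQ (n : ℕ) : Matrix (Fin (n+2)) (Fin (n+2)) ℍ[ℝ] :=
  fun r c =>
    if (r = 0 ∧ c = Fin.last (n+1)) ∨ (r = Fin.last (n+1) ∧ c = 0)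
      ∨ (r = c ∧ r ≠ 0 ∧ r ≠ Fin.last (n+1)) then 1 else 0

def JC (n : ℕ) : Matrix (Fin (n+2)) (Fin (n+2)) ℂ :=
  fun r c =>
    if (r = 0 ∧ c = Fin.last (n+1)) ∨ (r = Fin.last (n+1) ∧ c = 0)
      ∨ (r = c ∧ r ≠ 0 ∧ r ≠ Fin.last (n+1)) then 1 else 0

def Jt (n : ℕ) : Matrix (Fin (n+2) ⊕ Fin (n+2)) (Fin (n+2) ⊕ Fin (n+2)) ℂ :=
  Matrix.fromBlocks (JC n) 0 0 (JC n)

/-- Extend a vector indexed by `1,…,n` by zero to an index `0,…,n+1`. -/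
def extC (n : ℕ) (y : Fin n → ℂ) : Fin (n+2) → ℂ :=
  fun r => if h : 1 ≤ r.val ∧ r.val ≤ n then y ⟨r.val - 1, by omega⟩ else 0

def extH (n : ℕ) (x : Fin n → ℍ[ℝ]) : Fin (n+2) → ℍ[ℝ] :=
  fun r => if h : 1 ≤ r.val ∧ r.val ≤ n then x ⟨r.val - 1, by omega⟩ else 0

/-- The degree `-1` matrix `X(x)`, `X(x)_{a,0} = conj x_a`, `X(x)_{n+1,a} = -x_a`. -/
def Xm (n : ℕ) (x : Fin n → ℍ[ℝ]) : Matrix (Fin (n+2)) (Fin (n+2)) ℍ[ℝ] :=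
  fun r c =>
    if c = 0 then extH n (fun a => star (x a)) r
    else if r = Fin.last (n+1) then -(extH n x c) else 0

/-- The degree `-2` matrix `P(p)`, whose only nonzero entry is `P(p)_{n+1,0} = -p`. -/
def Pm (n : ℕ) (p : ℍ[ℝ]) : Matrix (Fin (n+2)) (Fin (n+2)) ℍ[ℝ] :=
  fun r c => if r = Fin.last (n+1) ∧ c = 0 then -p else 0

/-- The block-diagonal matrix `diag(s·z, A, s⁻¹·z)`. -/
def gD (n : ℕ) (s : ℝ) (z : ℍ[ℝ]) (A : Matrix (Fin n) (Fin n) ℍ[ℝ]) :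
    Matrix (Fin (n+2)) (Fin (n+2)) ℍ[ℝ] :=
  fun r c =>
    if r = 0 ∧ c = 0 then (s : ℍ[ℝ]) * z
    else if r = Fin.last (n+1) ∧ c = Fin.last (n+1) then ((s⁻¹ : ℝ) : ℍ[ℝ]) * z
    else if h : (1 ≤ r.val ∧ r.val ≤ n) ∧ (1 ≤ c.val ∧ c.val ≤ n) then
      A ⟨r.val - 1, by omega⟩ ⟨c.val - 1, by omega⟩
    else 0

theorem extH_zero' (n : ℕ) (x : Fin n → ℍ[ℝ]) : extH n x 0 = 0 := by
  simp [extH]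

theorem extH_last' (n : ℕ) (x : Fin n → ℍ[ℝ]) : extH n x (Fin.last (n+1)) = 0 := by
  simp [extH]

theorem extH_mid' (n : ℕ) (x : Fin n → ℍ[ℝ]) (a : Fin n) :
    extH n x a.castSucc.succ = x a := by
  have h : (a : ℕ) + 1 ≤ n := a.2
  simp [extH, h]

theorem Xm_row_zero (n : ℕ) (x : Fin n → ℍ[ℝ]) (c : Fin (n+2)) : Xm n x 0 c = 0 := by
  have h : (0 : Fin (n+2)) ≠ Fin.last (n+1) := by simp [Fin.ext_iff]
  simp [Xm, extH_zero', h]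

theorem Xm_col_last (n : ℕ) (x : Fin n → ℍ[ℝ]) (r : Fin (n+2)) :
    Xm n x r (Fin.last (n+1)) = 0 := by
  have h : Fin.last (n+1) ≠ (0 : Fin (n+2)) := by simp [Fin.ext_iff]
  simp [Xm, extH_last', h]

theorem Xm_mul (n : ℕ) (x y : Fin n → ℍ[ℝ]) :
    Xm n x * Xm n y = Pm n (∑ a : Fin n, x a * star (y a)) := by
  ext1 r c
  rw [Matrix.mul_apply, Fin.sum_univ_succ, Fin.sum_univ_castSucc, Fin.succ_last,
    Xm_row_zero, Xm_col_last, mul_zero, zero_mul, zero_add, add_zero]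
  have h1 : ∀ a : Fin n, a.castSucc.succ ≠ Fin.last (n+1) := by
    intro a h
    have := a.2
    simp [Fin.ext_iff] at h
    omega
  have h2 : ∀ a : Fin n, a.castSucc.succ ≠ (0 : Fin (n+2)) := fun a => Fin.succ_ne_zero _
  by_cases hr : r = Fin.last (n+1) <;> by_cases hc : c = 0 <;>
    simp only [Xm, Pm, hr, hc, h1, h2, extH_mid', if_true, if_false, and_true, and_false,
      true_and, false_and, mul_zero, zero_mul, Finset.sum_const_zero, neg_mul,
      Finset.sum_neg_distrib]

/-- the bracket of two degree `-1` matrices is a degree `-2` matrix: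
`[X(x), X(y)] = P(p)` with `p = Σ (x_a·conj y_a − y_a·conj x_a)` purely imaginary. -/
theorem stmt6 (n : ℕ) (hn : 1 ≤ n) (x y : Fin n → ℍ[ℝ]) :
    Xm n x * Xm n y - Xm n y * Xm n x =
      Pm n (∑ a : Fin n, (x a * star (y a) - y a * star (x a))) ∧
    (∑ a : Fin n, (x a * star (y a) - y a * star (x a))).re = 0 := by
  constructor
  · rw [Xm_mul, Xm_mul, Finset.sum_sub_distrib]
    ext1 r c
    simp only [Matrix.sub_apply, Pm]
    split_ifs
    · abel
    · simp
  · have h : ∀ s : Finset (Fin n),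
        (∑ a ∈ s, (x a * star (y a) - y a * star (x a))).re = 0 := by
      intro s
      induction s using Finset.induction_on with
      | empty => simp
      | insert a s ha ih =>
        rw [Finset.sum_insert ha, Quaternion.re_add, ih]
        simp
        ring
    exact h _
end
end

section
/- Let n ≥ 1 and x ∈ ℍⁿ, and let i·x ∈ ℍⁿ denote entrywise left multiplication by the quaternion unit i. Then the 0-th column of φ(X(i·x)) equals (−i) times the 0-th column of φ(X(x)) (scalar multiplication in ℂ^{2n+4}); i.e., the degree −1 component map M ↦ (0-th column of φ(M)) intertwines left multiplication by i on x with multiplication by −i. -/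
open Quaternion Matrix

noncomputable section

/-- the degree `-1` component map `M ↦ (0-th column of φ(M))`
intertwines left multiplication by `i` on `x` with multiplication by `−i`. -/
theorem stmt13 (n : ℕ) (hn : 1 ≤ n) (x : Fin n → ℍ[ℝ]) :
    ∀ r : Fin (n+2) ⊕ Fin (n+2),
      phi (n+2) (Xm n (fun a => iq * x a)) r (Sum.inl 0) =
        (-Complex.I) * phi (n+2) (Xm n x) r (Sum.inl 0) := by
  have h0 : iq.re = 0 := rfl
  have h1 : iq.imI = 1 := rfl
  have h2 : iq.imJ = 0 := rfl
  have h3 : iq.imK = 0 := rfl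
  rintro (r | r)
  · simp only [phi, Matrix.fromBlocks_apply₁₁, Matrix.map_apply, Xm, if_true, extH]
    split_ifs with h
    · apply Complex.ext <;> simp [Qc, h0, h1, h2, h3]
    · apply Complex.ext <;> simp [Qc]
  · simp only [phi, Matrix.fromBlocks_apply₂₁, Matrix.map_apply, Xm, if_true, extH]
    split_ifs with h
    · apply Complex.ext <;> simp [Qj, h0, h1, h2, h3]
    · apply Complex.ext <;> simp [Qj]
end
end
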